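/- arXiv:1704.04191 — 3 statements merged into one kernel-verified Lean document; each statement's English description precedes it below -/
import Mathlib

section
/- Let F : ℝⁿ ⇉ ℝᵐ be a set-valued map and (x̄, ȳ) ∈ gph F a point at which gph F is locally closed. Then reg(F; x̄|ȳ) = |D*F(x̄|ȳ)⁻¹|⁺. Consequently, F is metrically regular at x̄ for ȳ if and only if |D*F(x̄|ȳ)⁻¹|⁺ < ∞, which is equivalent to the implication: 0 ∈ D*F(x̄|ȳ)(u) implies u = 0. -/
open Filter Topology Set Metric RealInnerProductSpace
open scoped ENNReal NNReal Pointwise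

noncomputable section

/-- Graph of a set-valued map. -/
def svGraph {α β : Type*} (F : α → Set β) : Set (α × β) := {p | p.2 ∈ F p.1}

/-- Inverse of a set-valued map. -/
def svInv {α β : Type*} (F : α → Set β) : β → Set α := fun y => {x | y ∈ F x}

/-- Local closedness of a set at a point of a metric space. -/
def LocClosedAt {α : Type*} [PseudoMetricSpace α] (s : Set α) (p : α) : Prop :=
  ∃ r : ℝ, 0 < r ∧ IsClosed (s ∩ Metric.closedBall p r)

section Cones

variable {X : Type*} [NormedAddCommGroup X] [NormedSpace ℝ X]

/-- Bouligand-Severi contingent cone. -/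
def contingentCone (Ω : Set X) (x : X) : Set X :=
  { u | ∃ (t : ℕ → ℝ) (uk : ℕ → X), (∀ k, 0 < t k) ∧
      Tendsto t atTop (𝓝 0) ∧ Tendsto uk atTop (𝓝 u) ∧ ∀ k, x + t k • uk k ∈ Ω }

/-- Bouligand paratingent cone. -/
def paratingentCone (Ω : Set X) (x : X) : Set X :=
  { u | ∃ (t : ℕ → ℝ) (uk : ℕ → X) (xk : ℕ → X), (∀ k, 0 < t k) ∧
      Tendsto t atTop (𝓝 0) ∧ Tendsto uk atTop (𝓝 u) ∧
      (∀ k, xk k ∈ Ω) ∧ Tendsto xk atTop (𝓝 x) ∧ ∀ k, xk k + t k • uk k ∈ Ω }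

end Cones

section NormalCones

variable {X : Type*} [NormedAddCommGroup X] [InnerProductSpace ℝ X]

/-- Fréchet (regular) normal cone. -/
def frechetNormalCone (Ω : Set X) (x : X) : Set X :=
  { v | ∀ ε : ℝ, 0 < ε → ∃ δ : ℝ, 0 < δ ∧ ∀ y ∈ Ω, ‖y - x‖ < δ →
      ⟪v, y - x⟫ ≤ ε * ‖y - x‖ }

/-- Limiting (Mordukhovich) normal cone. -/
def limitingNormalCone (Ω : Set X) (x : X) : Set X :=
  { v | ∃ (xk : ℕ → X) (vk : ℕ → X), (∀ k, xk k ∈ Ω) ∧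
      Tendsto xk atTop (𝓝 x) ∧ Tendsto vk atTop (𝓝 v) ∧
      ∀ k, vk k ∈ frechetNormalCone Ω (xk k) }

end NormalCones

section Derivatives

variable {E F : Type*} [NormedAddCommGroup E] [NormedSpace ℝ E]
  [NormedAddCommGroup F] [NormedSpace ℝ F]

/-- Graphical derivative. -/
def gDeriv (Fm : E → Set F) (x : E) (y : F) : E → Set F := fun u =>
  {v | (u, v) ∈ contingentCone (svGraph Fm) (x, y)}

/-- Strict graphical derivative. -/
def sgDeriv (Fm : E → Set F) (x : E) (y : F) : E → Set F := fun u =>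
  {v | (u, v) ∈ paratingentCone (svGraph Fm) (x, y)}

end Derivatives

section Coderivative

variable {E F : Type*} [NormedAddCommGroup E] [InnerProductSpace ℝ E]
  [NormedAddCommGroup F] [InnerProductSpace ℝ F]

/-- Coderivative: `w ∈ D*F(x|y)(z)` iff `(w, -z)` is in the limiting normal cone
to the graph of `F` (viewed inside the `ℓ²` product) at `(x, y)`. -/
def coDeriv (Fm : E → Set F) (x : E) (y : F) : F → Set E := fun z =>
  { w | (WithLp.equiv 2 (E × F)).symm (w, -z) ∈
      limitingNormalCone ((WithLp.equiv 2 (E × F)).symm '' svGraph Fm)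
        ((WithLp.equiv 2 (E × F)).symm (x, y)) }

end Coderivative

section Norms

variable {E F : Type*} [NormedAddCommGroup E] [NormedAddCommGroup F]

/-- Outer norm of a (positively homogeneous) set-valued map. -/
def outerNormSV (H : E → Set F) : ℝ≥0∞ :=
  ⨆ (x : E) (_ : ‖x‖ ≤ 1) (y : F) (_ : y ∈ H x), (‖y‖₊ : ℝ≥0∞)

/-- Inner norm of a (positively homogeneous) set-valued map. -/
def innerNormSV (H : E → Set F) : ℝ≥0∞ :=
  ⨆ (x : E) (_ : ‖x‖ ≤ 1), ⨅ (y : F) (_ : y ∈ H x), (‖y‖₊ : ℝ≥0∞)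

/-- Positive homogeneity of a set-valued map. -/
def PosHomogeneous {E F : Type*} [NormedAddCommGroup E] [NormedSpace ℝ E]
    [NormedAddCommGroup F] [NormedSpace ℝ F] (H : E → Set F) : Prop :=
  (0 : F) ∈ H 0 ∧ ∀ (c : ℝ), 0 < c → ∀ x, H (c • x) = c • (H x)

end Norms

section Stability

variable {E F : Type*} [NormedAddCommGroup E] [NormedAddCommGroup F]

/-- Metric regularity with constant `κ`. -/
def MetrRegWith (κ : ℝ≥0) (Fm : E → Set F) (xbar : E) (ybar : F) : Prop :=
  ∃ U ∈ 𝓝 xbar, ∃ V ∈ 𝓝 ybar, ∀ x ∈ U, ∀ y ∈ V,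
    EMetric.infEdist x (svInv Fm y) ≤ (κ : ℝ≥0∞) * EMetric.infEdist y (Fm x)

/-- The regularity modulus `reg (F; xbar|ybar)`. -/
def regMod (Fm : E → Set F) (xbar : E) (ybar : F) : ℝ≥0∞ :=
  ⨅ (κ : ℝ≥0) (_ : MetrRegWith κ Fm xbar ybar), (κ : ℝ≥0∞)

/-- Aubin property with constant `κ`. -/
def AubinWith (κ : ℝ≥0) (S : F → Set E) (ybar : F) (xbar : E) : Prop :=
  ∃ V ∈ 𝓝 ybar, ∃ U ∈ 𝓝 xbar, ∀ y ∈ V, ∀ y' ∈ V, ∀ x ∈ S y' ∩ U,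
    ∃ x' ∈ S y, ‖x - x'‖ ≤ (κ : ℝ) * ‖y - y'‖

/-- The Lipschitz modulus `lip (S; ybar|xbar)`. -/
def lipMod (S : F → Set E) (ybar : F) (xbar : E) : ℝ≥0∞ :=
  ⨅ (κ : ℝ≥0) (_ : AubinWith κ S ybar xbar), (κ : ℝ≥0∞)

/-- Strong metric subregularity with constant `κ`. -/
def SubregWith (κ : ℝ≥0) (Fm : E → Set F) (xbar : E) (ybar : F) : Prop :=
  ∃ U ∈ 𝓝 xbar, ∀ x ∈ U, (‖x - xbar‖₊ : ℝ≥0∞) ≤ (κ : ℝ≥0∞) * EMetric.infEdist ybar (Fm x)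

/-- The subregularity modulus `subreg (F; xbar|ybar)`. -/
def subregMod (Fm : E → Set F) (xbar : E) (ybar : F) : ℝ≥0∞ :=
  ⨅ (κ : ℝ≥0) (_ : SubregWith κ Fm xbar ybar), (κ : ℝ≥0∞)

/-- Isolated calmness with constant `κ`. -/
def CalmWith (κ : ℝ≥0) (S : F → Set E) (ybar : F) (xbar : E) : Prop :=
  ∃ V ∈ 𝓝 ybar, ∃ U ∈ 𝓝 xbar, ∀ y ∈ V, ∀ x ∈ S y ∩ U, ‖x - xbar‖ ≤ (κ : ℝ) * ‖y - ybar‖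

/-- The calmness modulus `clm (S; ybar|xbar)`. -/
def clmMod (S : F → Set E) (ybar : F) (xbar : E) : ℝ≥0∞ :=
  ⨅ (κ : ℝ≥0) (_ : CalmWith κ S ybar xbar), (κ : ℝ≥0∞)

/-- Strong metric regularity: metric regularity plus a single-valued localization
of the inverse. -/
def StrongMetrReg (Fm : E → Set F) (xbar : E) (ybar : F) : Prop :=
  (∃ κ : ℝ≥0, MetrRegWith κ Fm xbar ybar) ∧
  ∃ U ∈ 𝓝 xbar, ∃ V ∈ 𝓝 ybar, ∀ y ∈ V, (svInv Fm y ∩ U).Subsingleton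

end Stability

/-!
Metric regularity of `F` is the Aubin property of `F⁻¹`, with the same modulus up to an arbitrarily
small loss, so everything reduces to the Aubin modulus of `F⁻¹`. Moving along the graph in the
direction of a Fréchet normal `(v, w)` shows that an Aubin constant `κ` forces `‖w‖ ≤ κ ‖v‖`.
Conversely, let this inequality hold for all Fréchet normals at graph points near the reference
point. To solve `y ∈ F x` from a nearby graph point `(x₀, y₀)`, minimize the penalty function
`(x, z) ↦ √(‖x - x₀‖² + δ²) + κ ‖z - y‖` over a compact piece of the graph: at a minimizer with
`z ≠ y` the negative gradient would be a Fréchet normal `(v, w)` with `‖v‖ < 1` and `‖w‖ = κ`.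
Finally, compactness lets the inequality pass between limiting normals at the reference point and
Fréchet normals at nearby points, and the best constant for limiting normals is the outer norm of
the inverse coderivative.
-/

section OuterNorm

variable {E F : Type*} [NormedAddCommGroup E] [NormedSpace ℝ E]
  [NormedAddCommGroup F] [NormedSpace ℝ F] {H : E → Set F}

theorem posHomogeneous_iff_smul_mem :
    PosHomogeneous H ↔
      (0 : F) ∈ H 0 ∧ ∀ c : ℝ, 0 < c → ∀ x, ∀ y ∈ H x, c • y ∈ H (c • x) := by
  refine and_congr_right fun _ => ⟨fun h c hc x y hy => ?_, fun h c hc x => ?_⟩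
  · rw [h c hc x]
    exact smul_mem_smul_set hy
  · refine Subset.antisymm (fun y hy => ?_) (smul_set_subset_iff.2 fun y => h c hc x y)
    rw [mem_smul_set_iff_inv_smul_mem₀ hc.ne']
    simpa only [inv_smul_smul₀ hc.ne'] using h c⁻¹ (inv_pos.2 hc) _ y hy

theorem PosHomogeneous.smul_mem (hH : PosHomogeneous H) {c : ℝ} (hc : 0 < c) {x : E} {y : F}
    (hy : y ∈ H x) : c • y ∈ H (c • x) :=
  (posHomogeneous_iff_smul_mem.1 hH).2 c hc x y hy

theorem PosHomogeneous.svInv (hH : PosHomogeneous H) : PosHomogeneous (svInv H) :=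
  posHomogeneous_iff_smul_mem.2 ⟨hH.1, fun _ hc _ _ hx => hH.smul_mem hc hx⟩

theorem outerNormSV_le_coe_iff {E F : Type*} [NormedAddCommGroup E] [NormedAddCommGroup F]
    {H : E → Set F} {κ : ℝ≥0} :
    outerNormSV H ≤ κ ↔ ∀ x, ‖x‖ ≤ 1 → ∀ y ∈ H x, ‖y‖ ≤ κ := by
  simp only [outerNormSV, iSup_le_iff, ENNReal.coe_le_coe, ← NNReal.coe_le_coe, coe_nnnorm]

theorem PosHomogeneous.outerNormSV_le_coe_iff (hH : PosHomogeneous H) {κ : ℝ≥0} :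
    outerNormSV H ≤ κ ↔ ∀ x, ∀ y ∈ H x, ‖y‖ ≤ κ * ‖x‖ := by
  rw [_root_.outerNormSV_le_coe_iff]
  refine ⟨fun h x y hy => ?_, fun h x hx y hy =>
    (h x y hy).trans (mul_le_of_le_one_right κ.coe_nonneg hx)⟩
  have hbound : ∀ s > ‖x‖, ‖y‖ ≤ κ * s := fun s hs => by
    have hs₀ : 0 < s := (norm_nonneg x).trans_lt hs
    have hx : ‖s⁻¹ • x‖ ≤ 1 := by
      rw [norm_smul_of_nonneg (inv_pos.2 hs₀).le, inv_mul_le_one₀ hs₀]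
      exact hs.le
    have hy := h _ hx _ (hH.smul_mem (inv_pos.2 hs₀) hy)
    rwa [norm_smul_of_nonneg (inv_pos.2 hs₀).le, inv_mul_le_iff₀' hs₀] at hy
  have hlim : Tendsto (fun s : ℝ => κ * s) (𝓝[>] ‖x‖) (𝓝 (κ * ‖x‖)) :=
    ((continuous_const_mul (κ : ℝ)).tendsto _).mono_left nhdsWithin_le_nhds
  exact ge_of_tendsto hlim (eventually_mem_nhdsWithin.mono hbound)

theorem PosHomogeneous.exists_mul_norm_le_norm_fst [ProperSpace E] [ProperSpace F]
    (hH : PosHomogeneous H) (hcl : IsClosed (svGraph H)) (h0 : ∀ y ∈ H 0, y = 0) :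
    ∃ c > 0, ∀ p ∈ svGraph H, c * ‖p‖ ≤ ‖p.1‖ := by
  have hpos : ∀ p ∈ sphere (0 : E × F) 1 ∩ svGraph H, 0 < ‖p.1‖ := by
    rintro ⟨x, y⟩ ⟨hp, hy⟩
    refine norm_pos_iff.2 fun hx : x = 0 => ne_zero_of_mem_unit_sphere ⟨_, hp⟩ ?_
    subst hx
    exact Prod.ext rfl (h0 y hy)
  obtain ⟨c, hc, hbound⟩ := ((isCompact_sphere (0 : E × F) 1).inter_right hcl).exists_forall_le'
    continuous_fst.norm.continuousOn hpos
  refine ⟨c, hc, fun p hp => ?_⟩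
  rcases eq_or_ne p 0 with rfl | hp0
  · simp
  have hn : 0 < ‖p‖ := norm_pos_iff.2 hp0
  have hunit : ‖p‖⁻¹ • p ∈ sphere (0 : E × F) 1 := by
    rw [mem_sphere_zero_iff_norm, norm_smul_of_nonneg (inv_pos.2 hn).le, inv_mul_cancel₀ hn.ne']
  have hle := hbound _ ⟨hunit, hH.smul_mem (inv_pos.2 hn) hp⟩
  rwa [Prod.smul_fst, norm_smul_of_nonneg (inv_pos.2 hn).le, ← div_eq_inv_mul, le_div_iff₀ hn]
    at hle

theorem PosHomogeneous.outerNormSV_lt_top_iff [ProperSpace E] [ProperSpace F]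
    (hH : PosHomogeneous H) (hcl : IsClosed (svGraph H)) :
    outerNormSV H < ⊤ ↔ ∀ y ∈ H 0, y = 0 := by
  refine ⟨fun h y hy => ?_, fun h => ?_⟩
  · lift outerNormSV H to ℝ≥0 using h.ne with κ hκ
    simpa using hH.outerNormSV_le_coe_iff.1 hκ.ge 0 y hy
  · obtain ⟨c, hc, hbound⟩ := hH.exists_mul_norm_le_norm_fst hcl h
    lift c to ℝ≥0 using hc.le
    refine (hH.outerNormSV_le_coe_iff (κ := c⁻¹).2 fun x y hy => ?_).trans_lt ENNReal.coe_lt_top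
    rw [NNReal.coe_inv, ← div_eq_inv_mul, le_div_iff₀' hc]
    exact (mul_le_mul_of_nonneg_left (norm_snd_le (x, y)) hc.le).trans (hbound (x, y) hy)

end OuterNorm

section AubinProperty

variable {E Y : Type*} [NormedAddCommGroup E] [NormedAddCommGroup Y]
  {Fm : E → Set Y} {xbar : E} {ybar : Y} {κ κ' : ℝ≥0}

theorem edist_le_coe_mul_edist_iff {x x' : E} {y y' : Y} :
    edist x x' ≤ κ * edist y y' ↔ ‖x - x'‖ ≤ κ * ‖y - y'‖ := by
  simp only [edist_nndist, ← ENNReal.coe_mul, ENNReal.coe_le_coe, ← NNReal.coe_le_coe,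
    NNReal.coe_mul, coe_nndist, dist_eq_norm]

theorem AubinWith.mono {S : Y → Set E} (h : AubinWith κ S ybar xbar) (hκ : κ ≤ κ') :
    AubinWith κ' S ybar xbar := by
  obtain ⟨V, hV, U, hU, hS⟩ := h
  refine ⟨V, hV, U, hU, fun y hy y' hy' x hx => ?_⟩
  obtain ⟨x', hx', hle⟩ := hS y hy y' hy' x hx
  exact ⟨x', hx', hle.trans (by gcongr)⟩

theorem MetrRegWith.aubinWith_svInv (h : MetrRegWith κ Fm xbar ybar) (hκ : κ < κ') :
    AubinWith κ' (svInv Fm) ybar xbar := by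
  obtain ⟨U, hU, V, hV, hreg⟩ := h
  refine ⟨V, hV, U, hU, fun y hy y' _ x ⟨hx, hxU⟩ => ?_⟩
  rcases eq_or_ne y y' with rfl | hne
  · exact ⟨x, hx, by simp⟩
  have hdist : infEDist x (svInv Fm y) < κ' * edist y y' := calc
    infEDist x (svInv Fm y) ≤ κ * infEDist y (Fm x) := hreg x hxU y hy
    _ ≤ κ * edist y y' := by gcongr; exact infEDist_le_edist_of_mem hx
    _ < κ' * edist y y' := by
      rw [ENNReal.mul_lt_mul_iff_left (edist_pos.2 hne).ne' (edist_ne_top y y')]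
      exact_mod_cast hκ
  obtain ⟨x', hx', hlt⟩ := infEDist_lt_iff.1 hdist
  exact ⟨x', hx', edist_le_coe_mul_edist_iff.1 hlt.le⟩

theorem AubinWith.metrRegWith (h : AubinWith κ (svInv Fm) ybar xbar) (hκ : 0 < κ)
    (hgr : ybar ∈ Fm xbar) : MetrRegWith κ Fm xbar ybar := by
  obtain ⟨V, hV, U, hU, hS⟩ := h
  have haubin : ∀ x ∈ U, ∀ y ∈ V, ∀ z ∈ Fm x ∩ V, infEDist x (svInv Fm y) ≤ κ * edist y z := by
    rintro x hx y hy z ⟨hz, hzV⟩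
    obtain ⟨x', hx', hle⟩ := hS y hy z hzV x ⟨hz, hx⟩
    exact (infEDist_le_edist_of_mem hx').trans (edist_le_coe_mul_edist_iff.2 hle)
  obtain ⟨ρ, hρ, hρV⟩ := Metric.mem_nhds_iff.1 hV
  obtain ⟨σ, hσ, hσρ⟩ : ∃ σ : ℝ, 0 < σ ∧ σ * (1 + 2 * κ) = κ * ρ :=
    ⟨κ * ρ / (1 + 2 * κ), by positivity, div_mul_cancel₀ _ (by positivity)⟩
  have hσV : ball ybar σ ⊆ V := (ball_subset_ball (by nlinarith)).trans hρV
  refine ⟨U ∩ ball xbar σ, inter_mem hU (ball_mem_nhds _ hσ), ball ybar σ, ball_mem_nhds _ hσ,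
    fun x ⟨hxU, hx⟩ y hy => ?_⟩
  have hκ_ne : (κ : ℝ≥0∞) ≠ 0 := by exact_mod_cast hκ.ne'
  suffices ∀ z ∈ Fm x, infEDist x (svInv Fm y) ≤ κ * edist y z by
    rw [mul_comm, ← ENNReal.div_le_iff hκ_ne ENNReal.coe_ne_top]
    refine le_infEDist.2 fun z hz => ?_
    rw [ENNReal.div_le_iff hκ_ne ENNReal.coe_ne_top, mul_comm]
    exact this z hz
  intro z hz
  by_cases hzρ : z ∈ ball ybar ρ
  · exact haubin x hxU y (hσV hy) z ⟨hz, hρV hzρ⟩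
  -- A value `z` far from `ybar` loses to the reference point `(xbar, ybar)`.
  have hfar : dist x xbar + κ * dist y ybar ≤ κ * dist y z := by
    have hyz := dist_triangle_left z ybar y
    simp only [mem_ball, not_lt] at hx hy hzρ
    nlinarith
  calc infEDist x (svInv Fm y)
      ≤ edist x xbar + infEDist xbar (svInv Fm y) := infEDist_le_edist_add_infEDist
    _ ≤ edist x xbar + κ * edist y ybar := by
        gcongr
        exact haubin xbar (mem_of_mem_nhds hU) y (hσV hy) ybar ⟨hgr, mem_of_mem_nhds hV⟩
    _ ≤ κ * edist y z := by
        simp only [edist_nndist]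
        exact_mod_cast hfar

theorem regMod_eq_lipMod_svInv (hgr : ybar ∈ Fm xbar) :
    regMod Fm xbar ybar = lipMod (svInv Fm) ybar xbar := by
  refine le_antisymm (le_of_forall_gt fun a ha => ?_) (le_of_forall_gt fun a ha => ?_)
  · simp only [lipMod, iInf_lt_iff] at ha
    obtain ⟨κ, h, hκ⟩ := ha
    obtain ⟨κ', hκκ', hκ'⟩ := ENNReal.lt_iff_exists_nnreal_btwn.1 hκ
    have hlt : κ < κ' := by exact_mod_cast hκκ'
    exact (iInf₂_le κ' ((h.mono hlt.le).metrRegWith (zero_le.trans_lt hlt) hgr)).trans_lt hκ'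
  · simp only [regMod, iInf_lt_iff] at ha
    obtain ⟨κ, h, hκ⟩ := ha
    obtain ⟨κ', hκκ', hκ'⟩ := ENNReal.lt_iff_exists_nnreal_btwn.1 hκ
    exact (iInf₂_le κ' (h.aubinWith_svInv (by exact_mod_cast hκκ'))).trans_lt hκ'

theorem regMod_lt_top_iff : regMod Fm xbar ybar < ⊤ ↔ ∃ κ : ℝ≥0, MetrRegWith κ Fm xbar ybar := by
  simp only [regMod, iInf_lt_iff, ENNReal.coe_lt_top, exists_prop, and_true]

end AubinProperty

section NormalConeCalculus

variable {X : Type*} [NormedAddCommGroup X] [InnerProductSpace ℝ X] {Ω : Set X} {x v : X}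

theorem mem_frechetNormalCone_iff_eventually :
    v ∈ frechetNormalCone Ω x ↔
      ∀ ε : ℝ, 0 < ε → ∀ᶠ y in 𝓝[Ω] x, ⟪v, y - x⟫ ≤ ε * ‖y - x‖ := by
  simp only [frechetNormalCone, eventually_nhdsWithin_iff, Metric.eventually_nhds_iff,
    dist_eq_norm]
  exact forall₂_congr fun _ _ => exists_congr fun _ => and_congr_right fun _ =>
    forall_congr' fun _ => forall_comm

theorem zero_mem_frechetNormalCone : (0 : X) ∈ frechetNormalCone Ω x :=
  fun _ hε => ⟨1, one_pos, fun _ _ _ => by rw [inner_zero_left]; positivity⟩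

theorem smul_mem_frechetNormalCone {c : ℝ} (hc : 0 < c) (hv : v ∈ frechetNormalCone Ω x) :
    c • v ∈ frechetNormalCone Ω x := by
  intro ε hε
  obtain ⟨δ, hδ, h⟩ := hv (ε / c) (div_pos hε hc)
  refine ⟨δ, hδ, fun y hy hyx => ?_⟩
  calc ⟪c • v, y - x⟫ = c * ⟪v, y - x⟫ := real_inner_smul_left _ _ _
    _ ≤ c * (ε / c * ‖y - x‖) := by gcongr; exact h y hy hyx
    _ = ε * ‖y - x‖ := by field_simp

theorem neg_mem_frechetNormalCone_of_isLocalMinOn {f : X → ℝ}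
    (hf : HasFDerivWithinAt f (innerSL ℝ v) Ω x) (hmin : IsLocalMinOn f Ω x) :
    -v ∈ frechetNormalCone Ω x := by
  refine mem_frechetNormalCone_iff_eventually.2 fun ε hε => ?_
  filter_upwards [hmin, hf.isLittleO.def hε] with y hy herr
  rw [innerSL_apply_apply] at herr
  rw [inner_neg_left]
  linarith [(abs_le.1 herr).2]

theorem zero_mem_limitingNormalCone (hx : x ∈ Ω) : (0 : X) ∈ limitingNormalCone Ω x :=
  ⟨fun _ => x, fun _ => 0, fun _ => hx, tendsto_const_nhds, tendsto_const_nhds,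
    fun _ => zero_mem_frechetNormalCone⟩

theorem smul_mem_limitingNormalCone {c : ℝ} (hc : 0 < c) (hv : v ∈ limitingNormalCone Ω x) :
    c • v ∈ limitingNormalCone Ω x := by
  obtain ⟨xk, vk, hxk, hx, hvk, hN⟩ := hv
  exact ⟨xk, fun k => c • vk k, hxk, hx, hvk.const_smul c,
    fun k => smul_mem_frechetNormalCone hc (hN k)⟩

theorem mem_limitingNormalCone_iff_mem_closure :
    v ∈ limitingNormalCone Ω x ↔
      (x, v) ∈ closure {q : X × X | q.1 ∈ Ω ∧ q.2 ∈ frechetNormalCone Ω q.1} := by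
  rw [mem_closure_iff_seq_limit]
  constructor
  · rintro ⟨xk, vk, hxk, hx, hvk, hN⟩
    exact ⟨fun k => (xk k, vk k), fun k => ⟨hxk k, hN k⟩, hx.prodMk_nhds hvk⟩
  · rintro ⟨q, hq, hlim⟩
    rw [Prod.tendsto_iff] at hlim
    exact ⟨fun k => (q k).1, fun k => (q k).2, fun k => (hq k).1, hlim.1, hlim.2,
      fun k => (hq k).2⟩

theorem isClosed_limitingNormalCone : IsClosed (limitingNormalCone Ω x) := by
  have hpre : limitingNormalCone Ω x = (fun v : X => (x, v)) ⁻¹'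
      closure {q : X × X | q.1 ∈ Ω ∧ q.2 ∈ frechetNormalCone Ω q.1} :=
    Set.ext fun _ => mem_limitingNormalCone_iff_mem_closure
  rw [hpre]
  exact isClosed_closure.preimage (Continuous.prodMk_right x)

theorem limitingNormalCone_subset_of_eventually {C : Set X} (hC : IsClosed C)
    (h : ∀ᶠ p in 𝓝[Ω] x, frechetNormalCone Ω p ⊆ C) : limitingNormalCone Ω x ⊆ C := by
  rintro v ⟨xk, vk, hxk, hx, hvk, hN⟩
  have hx' : Tendsto xk atTop (𝓝[Ω] x) := tendsto_nhdsWithin_iff.2 ⟨hx, .of_forall hxk⟩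
  exact hC.mem_of_tendsto hvk ((hx'.eventually h).mono fun k hk => hk (hN k))

theorem eventually_disjoint_frechetNormalCone {K : Set X} (hK : IsCompact K)
    (h : Disjoint K (limitingNormalCone Ω x)) :
    ∀ᶠ p in 𝓝[Ω] x, Disjoint K (frechetNormalCone Ω p) := by
  have hev : ∀ᶠ p in 𝓝 x, ∀ v ∈ K, ¬(p ∈ Ω ∧ v ∈ frechetNormalCone Ω p) := by
    refine hK.eventually_forall_of_forall_eventually fun v hv => ?_
    have hnotMem := mem_limitingNormalCone_iff_mem_closure.not.1 (disjoint_left.1 h hv)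
    rw [mem_closure_iff_frequently] at hnotMem
    exact not_frequently.1 hnotMem
  rw [eventually_nhdsWithin_iff]
  exact hev.mono fun p hp hpΩ => disjoint_left.2 fun v hvK hv => hp v hvK ⟨hpΩ, hv⟩

end NormalConeCalculus

section SmoothedNorm

variable {X : Type*} [NormedAddCommGroup X] [InnerProductSpace ℝ X] {a x : X}

theorem hasFDerivAt_sqrt_norm_sub_sq_add {c : ℝ} (h : ‖x - a‖ ^ 2 + c ≠ 0) :
    HasFDerivAt (fun z => √(‖z - a‖ ^ 2 + c))
      (innerSL ℝ ((√(‖x - a‖ ^ 2 + c))⁻¹ • (x - a))) x := by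
  have hsq := ((((hasFDerivAt_id (𝕜 := ℝ) x).sub_const a).norm_sq).add_const c).sqrt h
  refine hsq.congr_fderiv (ContinuousLinearMap.ext fun z => ?_)
  simp only [ContinuousLinearMap.comp_id, smul_apply, sub_apply, coe_innerSL_apply, map_sub,
    map_smul, nsmul_eq_mul, smul_eq_mul, id_eq, Nat.cast_ofNat]
  ring

theorem hasFDerivAt_norm_sub (h : x ≠ a) :
    HasFDerivAt (fun z => ‖z - a‖) (innerSL ℝ (‖x - a‖⁻¹ • (x - a))) x := by
  have hne : ‖x - a‖ ^ 2 + 0 ≠ 0 := by simpa [sub_eq_zero] using h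
  simpa only [add_zero, Real.sqrt_sq (norm_nonneg _)] using hasFDerivAt_sqrt_norm_sub_sq_add hne

end SmoothedNorm

section L2Product

theorem norm_le_norm_fst_add_norm_snd {E Y : Type*} [SeminormedAddCommGroup E]
    [SeminormedAddCommGroup Y] (p : WithLp 2 (E × Y)) : ‖p‖ ≤ ‖p.fst‖ + ‖p.snd‖ := by
  refine (sq_le_sq₀ (norm_nonneg _) (by positivity)).1 ?_
  rw [WithLp.prod_norm_sq_eq_of_L2, add_sq]
  linarith [mul_nonneg (norm_nonneg p.fst) (norm_nonneg p.snd)]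

variable {E Y : Type*} [NormedAddCommGroup E] [NormedAddCommGroup Y]

/-- The cone of all `v = (v₁, v₂)` in the `ℓ²` product with `‖v₂‖ ≤ κ ‖v₁‖`; bounds on normal cones
to a graph by a constant `κ` are inclusions into it. -/
def slopeCone (E Y : Type*) [NormedAddCommGroup E] [NormedAddCommGroup Y] (κ : ℝ≥0) :
    Set (WithLp 2 (E × Y)) := {v | ‖v.snd‖ ≤ κ * ‖v.fst‖}

theorem isClosed_slopeCone (κ : ℝ≥0) : IsClosed (slopeCone E Y κ) :=
  isClosed_le (WithLp.continuous_snd 2 E Y).norm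
    ((WithLp.continuous_fst 2 E Y).norm.const_mul (κ : ℝ))

variable [InnerProductSpace ℝ E] [InnerProductSpace ℝ Y]

theorem hasFDerivAt_comp_fst_add_comp_snd {f : E → ℝ} {g : Y → ℝ} {a : E} {b : Y}
    {p : WithLp 2 (E × Y)} (hf : HasFDerivAt f (innerSL ℝ a) p.fst)
    (hg : HasFDerivAt g (innerSL ℝ b) p.snd) :
    HasFDerivAt (fun q : WithLp 2 (E × Y) => f q.fst + g q.snd)
      (innerSL ℝ (WithLp.toLp 2 (a, b))) p := by
  have hsum := (hf.comp p (WithLp.fstL 2 ℝ E Y).hasFDerivAt).add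
    (hg.comp p (WithLp.sndL 2 ℝ E Y).hasFDerivAt)
  exact hsum.congr_fderiv (ContinuousLinearMap.ext fun q =>
    (WithLp.prod_inner_apply (WithLp.toLp 2 (a, b)) q).symm)

variable {Ω : Set (WithLp 2 (E × Y))} {p : WithLp 2 (E × Y)} {κ κ' : ℝ≥0}

theorem eventually_frechetNormalCone_subset_slopeCone [ProperSpace E] [ProperSpace Y]
    (hκ : κ < κ') (h : limitingNormalCone Ω p ⊆ slopeCone E Y κ) :
    ∀ᶠ q in 𝓝[Ω] p, frechetNormalCone Ω q ⊆ slopeCone E Y κ' := by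
  have hκ₁ : (κ : ℝ) < κ' := hκ
  have hκ₀ : (0 : ℝ) < κ' := κ.coe_nonneg.trans_lt hκ₁
  let K : Set (WithLp 2 (E × Y)) :=
    WithLp.homeomorphProd 2 E Y ⁻¹' closedBall 0 (κ' : ℝ)⁻¹ ×ˢ sphere 0 1
  have hK : IsCompact K := (WithLp.homeomorphProd 2 E Y).isCompact_preimage.2
    ((isCompact_closedBall _ _).prod (isCompact_sphere _ _))
  have hdisj : Disjoint K (limitingNormalCone Ω p) := by
    refine disjoint_left.2 fun v ⟨hfst, hsnd⟩ hv => ?_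
    have hfst : ‖v.fst‖ ≤ (κ' : ℝ)⁻¹ := mem_closedBall_zero_iff.1 hfst
    have hsnd : ‖v.snd‖ = 1 := mem_sphere_zero_iff_norm.1 hsnd
    have hlt : κ * ‖v.fst‖ < 1 := calc
      κ * ‖v.fst‖ ≤ κ * (κ' : ℝ)⁻¹ := by gcongr
      _ < 1 := by rwa [← div_eq_mul_inv, div_lt_one hκ₀]
    exact hlt.not_ge (hsnd ▸ h hv)
  filter_upwards [eventually_disjoint_frechetNormalCone hK hdisj] with q hq v hv
  by_contra hslope
  have hlt : κ' * ‖v.fst‖ < ‖v.snd‖ := not_le.1 hslope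
  have hpos : 0 < ‖v.snd‖ := lt_of_le_of_lt (by positivity) hlt
  refine disjoint_left.1 hq ⟨mem_closedBall_zero_iff.2 ?_, mem_sphere_zero_iff_norm.2 ?_⟩
    (smul_mem_frechetNormalCone (inv_pos.2 hpos) hv)
  · change ‖‖v.snd‖⁻¹ • v.fst‖ ≤ (κ' : ℝ)⁻¹
    rw [norm_smul_of_nonneg (inv_pos.2 hpos).le, inv_mul_le_iff₀ hpos, ← div_eq_mul_inv,
      le_div_iff₀' hκ₀]
    exact hlt.le
  · change ‖‖v.snd‖⁻¹ • v.snd‖ = 1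
    rw [norm_smul_of_nonneg (inv_pos.2 hpos).le, inv_mul_cancel₀ hpos.ne']

theorem norm_snd_le_of_inner_le {u v : WithLp 2 (E × Y)} {t ε : ℝ} (ht : 0 < t) (hε : 0 ≤ ε)
    (hv : v.snd ≠ 0) (hsnd : u.snd = t • v.snd) (hfst : ‖u.fst‖ ≤ κ * ‖u.snd‖)
    (h : ⟪v, u⟫ ≤ ε * ‖u‖) : ‖v.snd‖ ≤ κ * ‖v.fst‖ + ε * (κ + 1) := by
  have hnorm : ‖u.snd‖ = t * ‖v.snd‖ := by rw [hsnd, norm_smul_of_nonneg ht.le]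
  rw [hnorm] at hfst
  have hinner : ⟪v, u⟫ = ⟪v.fst, u.fst⟫ + t * ‖v.snd‖ ^ 2 := by
    rw [WithLp.prod_inner_apply]
    change ⟪v.fst, u.fst⟫ + ⟪v.snd, u.snd⟫ = _
    rw [hsnd, real_inner_smul_right, real_inner_self_eq_norm_sq]
  have hcs : -(‖v.fst‖ * (κ * (t * ‖v.snd‖))) ≤ ⟪v.fst, u.fst⟫ :=
    (neg_le_neg (by gcongr)).trans (neg_le_of_abs_le (abs_real_inner_le_norm v.fst u.fst))
  have hu : ε * ‖u‖ ≤ ε * ((κ + 1) * (t * ‖v.snd‖)) := by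
    gcongr
    linarith [norm_le_norm_fst_add_norm_snd u]
  refine le_of_mul_le_mul_left ?_ (mul_pos ht (norm_pos_iff.2 hv))
  linarith

theorem frechetNormalCone_subset_slopeCone_of_eventually
    (h : ∀ᶠ y in 𝓝 p.snd, ∃ x, WithLp.toLp 2 (x, y) ∈ Ω ∧ ‖x - p.fst‖ ≤ κ * ‖y - p.snd‖) :
    frechetNormalCone Ω p ⊆ slopeCone E Y κ := by
  intro v hv
  change ‖v.snd‖ ≤ κ * ‖v.fst‖
  rcases eq_or_ne v.snd 0 with h0 | h0
  · rw [h0, norm_zero]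
    positivity
  have hε : ∀ ε > 0, ‖v.snd‖ ≤ κ * ‖v.fst‖ + ε * (κ + 1) := by
    intro ε hε
    obtain ⟨δ, hδ, hN⟩ := hv ε hε
    have hy : Tendsto (fun t : ℝ => p.snd + t • v.snd) (𝓝[>] 0) (𝓝 p.snd) :=
      tendsto_nhdsWithin_of_tendsto_nhds <| Continuous.tendsto' (by fun_prop) _ _ (by simp)
    have hδt : ∀ᶠ t : ℝ in 𝓝[>] 0, (κ + 1) * ‖t • v.snd‖ < δ :=
      (tendsto_nhdsWithin_of_tendsto_nhds <|
        Continuous.tendsto' (by fun_prop) _ 0 (by simp)).eventually_lt_const hδ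
    obtain ⟨t, ⟨⟨x, hxΩ, hx⟩, ht⟩, ht₀ : 0 < t⟩ :=
      (((hy.eventually h).and hδt).and self_mem_nhdsWithin).exists
    let u : WithLp 2 (E × Y) := WithLp.toLp 2 (x, p.snd + t • v.snd) - p
    have hsnd : u.snd = t • v.snd := add_sub_cancel_left p.snd (t • v.snd)
    have hfst : ‖u.fst‖ ≤ κ * ‖u.snd‖ := hx
    have hu : ‖u‖ < δ := by
      refine lt_of_le_of_lt ?_ ht
      rw [← hsnd]
      linarith [norm_le_norm_fst_add_norm_snd u]
    exact norm_snd_le_of_inner_le ht₀ hε.le h0 hsnd hfst (hN _ hxΩ hu)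
  have hlim : Tendsto (fun ε : ℝ => κ * ‖v.fst‖ + ε * (κ + 1)) (𝓝[>] 0) (𝓝 (κ * ‖v.fst‖)) :=
    tendsto_nhdsWithin_of_tendsto_nhds <| Continuous.tendsto' (by fun_prop) _ _ (by simp)
  exact ge_of_tendsto hlim (eventually_mem_nhdsWithin.mono hε)

end L2Product

section Penalty

variable {E Y : Type*} [NormedAddCommGroup E] [NormedAddCommGroup Y]

/-- Penalty function whose minimizers over a graph solve `y ∈ F x` with `x` close to `x₀`; taking
`δ ≠ 0` makes the distance to `x₀` differentiable at `x₀` as well. -/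
def penalty (κ δ : ℝ) (x₀ : E) (y : Y) (p : WithLp 2 (E × Y)) : ℝ :=
  √(‖p.fst - x₀‖ ^ 2 + δ ^ 2) + κ * ‖p.snd - y‖

theorem continuous_penalty (κ δ : ℝ) (x₀ : E) (y : Y) : Continuous (penalty κ δ x₀ y) := by
  unfold penalty
  fun_prop

theorem penalty_self (κ δ : ℝ) (y : Y) (p : WithLp 2 (E × Y)) :
    penalty κ δ p.fst y p = |δ| + κ * ‖p.snd - y‖ := by
  simp [penalty, Real.sqrt_sq_eq_abs]

theorem abs_add_mul_norm_le_penalty (κ δ : ℝ) (x₀ : E) (y : Y) (p : WithLp 2 (E × Y)) :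
    |δ| + κ * ‖p.snd - y‖ ≤ penalty κ δ x₀ y p :=
  add_le_add_left (Real.abs_le_sqrt (le_add_of_nonneg_left (sq_nonneg _))) _

theorem norm_fst_sub_le_penalty {κ : ℝ} (hκ : 0 ≤ κ) (δ : ℝ) (x₀ : E) (y : Y)
    (p : WithLp 2 (E × Y)) : ‖p.fst - x₀‖ ≤ penalty κ δ x₀ y p :=
  (Real.le_sqrt_of_sq_le (le_add_of_nonneg_right (sq_nonneg δ))).trans
    (le_add_of_nonneg_right (by positivity))

variable [InnerProductSpace ℝ E] [InnerProductSpace ℝ Y]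
  {Ω : Set (WithLp 2 (E × Y))} {κ κ' : ℝ≥0}

theorem snd_eq_of_isLocalMinOn_penalty {δ : ℝ} {x₀ : E} {y : Y} {p : WithLp 2 (E × Y)}
    (hκ : 0 < κ) (hδ : δ ≠ 0) (hN : frechetNormalCone Ω p ⊆ slopeCone E Y κ)
    (hmin : IsLocalMinOn (penalty κ δ x₀ y) Ω p) : p.snd = y := by
  by_contra hne
  have hκ₀ : (0 : ℝ) < κ := hκ
  set s := √(‖p.fst - x₀‖ ^ 2 + δ ^ 2)
  have hpos : 0 < ‖p.fst - x₀‖ ^ 2 + δ ^ 2 := by positivity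
  have hg : HasFDerivAt (fun z => κ * ‖z - y‖)
      (innerSL ℝ ((κ : ℝ) • ‖p.snd - y‖⁻¹ • (p.snd - y))) p.snd := by
    rw [map_smul]
    exact (hasFDerivAt_norm_sub hne).const_mul (κ : ℝ)
  have hslope := hN (neg_mem_frechetNormalCone_of_isLocalMinOn
    (hasFDerivAt_comp_fst_add_comp_snd
      (hasFDerivAt_sqrt_norm_sub_sq_add hpos.ne') hg).hasFDerivWithinAt hmin)
  have hfst : ‖s⁻¹ • (p.fst - x₀)‖ < 1 := by
    have hlt : ‖p.fst - x₀‖ < s := Real.lt_sqrt_of_sq_lt (lt_add_of_pos_right _ (by positivity))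
    have hs₀ : 0 < s := Real.sqrt_pos.2 hpos
    rwa [norm_smul_of_nonneg (inv_pos.2 hs₀).le, inv_mul_lt_one₀ hs₀]
  have hsnd : ‖(κ : ℝ) • ‖p.snd - y‖⁻¹ • (p.snd - y)‖ = κ := by
    rw [norm_smul_of_nonneg κ.coe_nonneg, norm_smul, norm_inv, norm_norm,
      inv_mul_cancel₀ (norm_ne_zero_iff.2 (sub_ne_zero.2 hne)), mul_one]
  change ‖-((κ : ℝ) • ‖p.snd - y‖⁻¹ • (p.snd - y))‖ ≤ κ * ‖-(s⁻¹ • (p.fst - x₀))‖ at hslope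
  rw [norm_neg, norm_neg, hsnd] at hslope
  exact (mul_lt_of_lt_one_right hκ₀ hfst).not_ge hslope

theorem exists_mem_snd_eq_of_frechetNormalCone_subset {pbar p₀ : WithLp 2 (E × Y)} {r : ℝ} {y : Y}
    (hcomp : IsCompact (Ω ∩ closedBall pbar r))
    (hN : ∀ p ∈ Ω ∩ ball pbar r, frechetNormalCone Ω p ⊆ slopeCone E Y κ)
    (hκ : 0 < κ) (hκκ' : κ < κ') (hp₀ : p₀ ∈ Ω)
    (hr : dist p₀ pbar + (κ' + 2) * ‖p₀.snd - y‖ < r) :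
    ∃ p ∈ Ω, p.snd = y ∧ ‖p.fst - p₀.fst‖ ≤ κ' * ‖p₀.snd - y‖ := by
  rcases eq_or_ne p₀.snd y with h0 | h0
  · exact ⟨p₀, hp₀, h0, by simp [h0]⟩
  set d := ‖p₀.snd - y‖ with hd
  have hd₀ : 0 < d := norm_pos_iff.2 (sub_ne_zero.2 h0)
  have hκ₀ : (0 : ℝ) < κ := hκ
  -- This `δ` spends exactly the gap between `κ` and `κ'`.
  set δ := (κ' - κ) * d with hδ
  have hδ₀ : 0 < δ := mul_pos (sub_pos.2 hκκ') hd₀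
  have hp₀r : p₀ ∈ closedBall pbar r := mem_closedBall.2 (by nlinarith [κ'.coe_nonneg])
  obtain ⟨p, ⟨hpΩ, -⟩, hmin⟩ :=
    hcomp.exists_isMinOn ⟨p₀, hp₀, hp₀r⟩ (continuous_penalty κ δ p₀.fst y).continuousOn
  have hvalue : penalty κ δ p₀.fst y p₀ = κ' * d := by
    rw [penalty_self, abs_of_pos hδ₀, hδ, hd]
    ring
  have hle : penalty κ δ p₀.fst y p ≤ κ' * d := (hmin ⟨hp₀, hp₀r⟩).trans hvalue.le
  have hfst : ‖p.fst - p₀.fst‖ ≤ κ' * d :=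
    (norm_fst_sub_le_penalty κ.coe_nonneg δ p₀.fst y p).trans hle
  have hsnd : ‖p.snd - y‖ ≤ d := by
    have hlow := (abs_add_mul_norm_le_penalty κ δ p₀.fst y p).trans hle
    rw [abs_of_pos hδ₀] at hlow
    refine le_of_mul_le_mul_left ?_ hκ₀
    linarith
  have hpr : p ∈ ball pbar r := by
    have hsnd' : ‖p.snd - p₀.snd‖ ≤ d + d :=
      (norm_sub_le_norm_sub_add_norm_sub _ y _).trans
        (add_le_add hsnd (norm_sub_rev y p₀.snd).le)
    have hpp₀ : dist p p₀ ≤ ‖p.fst - p₀.fst‖ + ‖p.snd - p₀.snd‖ := by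
      rw [dist_eq_norm]
      exact norm_le_norm_fst_add_norm_snd (p - p₀)
    exact mem_ball.2 (by linarith [dist_triangle p p₀ pbar])
  have hlocal : IsLocalMinOn (penalty κ δ p₀.fst y) Ω p := by
    filter_upwards [self_mem_nhdsWithin, mem_nhdsWithin_of_mem_nhds (isOpen_ball.mem_nhds hpr)]
      with q hqΩ hq
    exact hmin ⟨hqΩ, ball_subset_closedBall hq⟩
  exact ⟨p, hpΩ, snd_eq_of_isLocalMinOn_penalty hκ hδ₀.ne' (hN p ⟨hpΩ, hpr⟩) hlocal, hfst⟩

end Penalty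

section LocallyClosed

theorem LocClosedAt.eventually_isCompact {α : Type*} [PseudoMetricSpace α] [ProperSpace α]
    {s : Set α} {p : α} (h : LocClosedAt s p) :
    ∀ᶠ r in 𝓝[>] (0 : ℝ), IsCompact (s ∩ closedBall p r) := by
  obtain ⟨r₀, hr₀, hcl⟩ := h
  filter_upwards [Ioc_mem_nhdsGT hr₀] with r hr
  rw [← inter_eq_right.2 (closedBall_subset_closedBall (x := p) hr.2), ← inter_assoc]
  exact (isCompact_closedBall p r).inter_left hcl

/-- The graph of a set-valued map inside the `ℓ²` product. -/
def l2Graph {E Y : Type*} (Fm : E → Set Y) : Set (WithLp 2 (E × Y)) := {p | p.snd ∈ Fm p.fst}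

theorem image_svGraph_eq_l2Graph {E Y : Type*} (Fm : E → Set Y) :
    (WithLp.equiv 2 (E × Y)).symm '' svGraph Fm = l2Graph Fm :=
  Equiv.image_symm_eq_preimage _ _

variable {E Y : Type*} [NormedAddCommGroup E] [NormedAddCommGroup Y]

theorem LocClosedAt.l2Graph {Fm : E → Set Y} {q : E × Y} (h : LocClosedAt (svGraph Fm) q) :
    LocClosedAt (l2Graph Fm) (WithLp.toLp 2 q) := by
  obtain ⟨r, hr, hcl⟩ := h
  refine ⟨r, hr, ?_⟩
  have hball : closedBall (WithLp.toLp 2 q) r ⊆ WithLp.ofLp ⁻¹' closedBall q r := fun p hp =>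
    max_le ((WithLp.dist_fst_le p (WithLp.toLp 2 q)).trans hp)
      ((WithLp.dist_snd_le p (WithLp.toLp 2 q)).trans hp)
  rw [← inter_eq_right.2 hball, ← inter_assoc]
  exact (hcl.preimage (WithLp.prod_continuous_ofLp 2 E Y)).inter isClosed_closedBall

end LocallyClosed

section Criterion

variable {E Y : Type*} [NormedAddCommGroup E] [InnerProductSpace ℝ E]
  [NormedAddCommGroup Y] [InnerProductSpace ℝ Y]
  {Fm : E → Set Y} {xbar : E} {ybar : Y} {κ κ' : ℝ≥0}

theorem mem_coDeriv_iff {w : E} {z : Y} :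
    w ∈ coDeriv Fm xbar ybar z ↔
      WithLp.toLp 2 (w, -z) ∈ limitingNormalCone (l2Graph Fm) (WithLp.toLp 2 (xbar, ybar)) := by
  rw [← image_svGraph_eq_l2Graph]
  rfl

theorem posHomogeneous_coDeriv (hgr : ybar ∈ Fm xbar) :
    PosHomogeneous (coDeriv Fm xbar ybar) := by
  refine posHomogeneous_iff_smul_mem.2 ⟨mem_coDeriv_iff.2 ?_, fun c hc z w hw => ?_⟩
  · rw [neg_zero]
    exact zero_mem_limitingNormalCone hgr
  · rw [mem_coDeriv_iff, ← smul_neg]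
    exact smul_mem_limitingNormalCone hc (mem_coDeriv_iff.1 hw)

theorem isClosed_svGraph_svInv_coDeriv : IsClosed (svGraph (svInv (coDeriv Fm xbar ybar))) := by
  have hpre : svGraph (svInv (coDeriv Fm xbar ybar)) = (fun q => WithLp.toLp 2 (q.1, -q.2)) ⁻¹'
      limitingNormalCone (l2Graph Fm) (WithLp.toLp 2 (xbar, ybar)) :=
    Set.ext fun _ => mem_coDeriv_iff
  rw [hpre]
  exact isClosed_limitingNormalCone.preimage (by fun_prop)

theorem outerNormSV_svInv_coDeriv_le_iff (hgr : ybar ∈ Fm xbar) :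
    outerNormSV (svInv (coDeriv Fm xbar ybar)) ≤ κ ↔
      limitingNormalCone (l2Graph Fm) (WithLp.toLp 2 (xbar, ybar)) ⊆ slopeCone E Y κ := by
  rw [(posHomogeneous_coDeriv hgr).svInv.outerNormSV_le_coe_iff]
  refine ⟨fun h v hv => ?_, fun h w u hu => ?_⟩
  · have hu : -v.snd ∈ svInv (coDeriv Fm xbar ybar) v.fst :=
      mem_coDeriv_iff.2 (by rwa [neg_neg])
    have hle := h _ _ hu
    rwa [norm_neg] at hle
  · have hle : ‖-u‖ ≤ κ * ‖w‖ := h (mem_coDeriv_iff.1 hu)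
    rwa [norm_neg] at hle

theorem AubinWith.eventually_frechetNormalCone_subset (h : AubinWith κ (svInv Fm) ybar xbar) :
    ∀ᶠ p in 𝓝[l2Graph Fm] (WithLp.toLp 2 (xbar, ybar)),
      frechetNormalCone (l2Graph Fm) p ⊆ slopeCone E Y κ := by
  obtain ⟨V, hV, U, hU, hS⟩ := h
  have hfst : ∀ᶠ p in 𝓝 (WithLp.toLp 2 (xbar, ybar)), p.fst ∈ U :=
    (WithLp.continuous_fst 2 E Y).continuousAt.eventually hU
  have hsnd : ∀ᶠ p in 𝓝 (WithLp.toLp 2 (xbar, ybar)), V ∈ 𝓝 p.snd :=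
    (WithLp.continuous_snd 2 E Y).continuousAt.eventually (eventually_mem_nhds_iff.2 hV)
  filter_upwards [self_mem_nhdsWithin, nhdsWithin_le_nhds hfst, nhdsWithin_le_nhds hsnd]
    with p hp hpU hpV
  refine frechetNormalCone_subset_slopeCone_of_eventually ?_
  filter_upwards [hpV] with y hy
  obtain ⟨x, hx, hle⟩ := hS y hy p.snd (mem_of_mem_nhds hpV) p.fst ⟨hp, hpU⟩
  exact ⟨x, hx, norm_sub_rev x p.fst ▸ hle⟩

theorem aubinWith_svInv_of_eventually_frechetNormalCone_subset
    [FiniteDimensional ℝ E] [FiniteDimensional ℝ Y]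
    (hloc : LocClosedAt (svGraph Fm) (xbar, ybar)) (hκ : 0 < κ) (hκκ' : κ < κ')
    (hN : ∀ᶠ p in 𝓝[l2Graph Fm] (WithLp.toLp 2 (xbar, ybar)),
      frechetNormalCone (l2Graph Fm) p ⊆ slopeCone E Y κ) :
    AubinWith κ' (svInv Fm) ybar xbar := by
  obtain ⟨r₀, hr₀, hN⟩ := Metric.mem_nhdsWithin_iff.1 hN
  obtain ⟨r, hcomp, hr, hrr₀⟩ :=
    (hloc.l2Graph.eventually_isCompact.and (Ioc_mem_nhdsGT hr₀)).exists
  obtain ⟨ρ, hρ, hρr⟩ : ∃ ρ : ℝ, 0 < ρ ∧ 2 * (κ' + 3) * ρ = r :=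
    ⟨r / (2 * (κ' + 3)), by positivity, mul_div_cancel₀ _ (by positivity)⟩
  refine ⟨ball ybar ρ, ball_mem_nhds _ hρ, ball xbar ρ, ball_mem_nhds _ hρ,
    fun y hy y' hy' x ⟨hx, hxρ⟩ => ?_⟩
  let p₀ : WithLp 2 (E × Y) := WithLp.toLp 2 (x, y')
  have hp₀ : dist p₀ (WithLp.toLp 2 (xbar, ybar)) < 2 * ρ := by
    rw [mem_ball, dist_eq_norm] at hxρ hy'
    rw [dist_eq_norm]
    exact (norm_le_norm_fst_add_norm_snd (p₀ - _)).trans_lt (two_mul ρ ▸ add_lt_add hxρ hy')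
  have hyy' : ‖y' - y‖ < 2 * ρ := by
    rw [mem_ball] at hy hy'
    rw [← dist_eq_norm]
    linarith [dist_triangle_right y' y ybar]
  obtain ⟨p, hp, hpy, hle⟩ := exists_mem_snd_eq_of_frechetNormalCone_subset hcomp
    (fun p hp => hN ⟨ball_subset_ball hrr₀ hp.2, hp.1⟩) hκ hκκ' (p₀ := p₀) (y := y) hx
    (by
      have hmul : (κ' + 2) * ‖y' - y‖ ≤ (κ' + 2) * (2 * ρ) := by gcongr
      change _ + (κ' + 2) * ‖y' - y‖ < r
      linarith)
  refine ⟨p.fst, ?_, ?_⟩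
  · change y ∈ Fm p.fst
    rw [← hpy]
    exact hp
  · rw [norm_sub_rev x, norm_sub_rev y]
    exact hle

theorem lipMod_svInv_eq_outerNormSV [FiniteDimensional ℝ E] [FiniteDimensional ℝ Y]
    (hgr : ybar ∈ Fm xbar)
    (hloc : LocClosedAt (svGraph Fm) (xbar, ybar)) :
    lipMod (svInv Fm) ybar xbar = outerNormSV (svInv (coDeriv Fm xbar ybar)) := by
  refine le_antisymm (le_of_forall_gt fun a ha => ?_) (le_iInf₂ fun κ h => ?_)
  · obtain ⟨κ₃, hκ₃, hκ₃a⟩ := ENNReal.lt_iff_exists_nnreal_btwn.1 ha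
    obtain ⟨κ₂, hκ₂, hκ₂₃⟩ := ENNReal.lt_iff_exists_nnreal_btwn.1 hκ₃
    obtain ⟨κ₁, hκ₁, hκ₁₂⟩ := ENNReal.lt_iff_exists_nnreal_btwn.1 hκ₂
    rw [ENNReal.coe_lt_coe] at hκ₁₂ hκ₂₃
    have hN := eventually_frechetNormalCone_subset_slopeCone hκ₁₂
      ((outerNormSV_svInv_coDeriv_le_iff hgr).1 hκ₁.le)
    have haubin := aubinWith_svInv_of_eventually_frechetNormalCone_subset hloc
      (zero_le.trans_lt hκ₁₂) hκ₂₃ hN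
    exact (iInf₂_le κ₃ haubin).trans_lt hκ₃a
  · exact (outerNormSV_svInv_coDeriv_le_iff hgr).2 (limitingNormalCone_subset_of_eventually
      (isClosed_slopeCone κ) h.eventually_frechetNormalCone_subset)

theorem coDeriv_criterion_for_metric_regularity_general [FiniteDimensional ℝ E]
    [FiniteDimensional ℝ Y] (Fm : E → Set Y) (xbar : E) (ybar : Y) (hgr : ybar ∈ Fm xbar)
    (hloc : LocClosedAt (svGraph Fm) (xbar, ybar)) :
    regMod Fm xbar ybar = outerNormSV (svInv (coDeriv Fm xbar ybar)) ∧
    ((∃ κ : ℝ≥0, MetrRegWith κ Fm xbar ybar) ↔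
      outerNormSV (svInv (coDeriv Fm xbar ybar)) < ⊤) ∧
    (outerNormSV (svInv (coDeriv Fm xbar ybar)) < ⊤ ↔
      ∀ u, (0 : E) ∈ coDeriv Fm xbar ybar u → u = 0) := by
  have hmod : regMod Fm xbar ybar = outerNormSV (svInv (coDeriv Fm xbar ybar)) :=
    (regMod_eq_lipMod_svInv hgr).trans (lipMod_svInv_eq_outerNormSV hgr hloc)
  exact ⟨hmod, hmod ▸ regMod_lt_top_iff.symm,
    (posHomogeneous_coDeriv hgr).svInv.outerNormSV_lt_top_iff isClosed_svGraph_svInv_coDeriv⟩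

end Criterion

/-- Coderivative criterion for metric regularity:
`reg (F; xbar|ybar) = |D*F(xbar|ybar)⁻¹|⁺`, with the equivalent conditions. -/
theorem coDeriv_criterion_for_metric_regularity {n m : ℕ}
    (Fm : EuclideanSpace ℝ (Fin n) → Set (EuclideanSpace ℝ (Fin m)))
    (xbar : EuclideanSpace ℝ (Fin n)) (ybar : EuclideanSpace ℝ (Fin m))
    (hgr : ybar ∈ Fm xbar) (hloc : LocClosedAt (svGraph Fm) (xbar, ybar)) :
    regMod Fm xbar ybar = outerNormSV (svInv (coDeriv Fm xbar ybar)) ∧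
    ((∃ κ : ℝ≥0, MetrRegWith κ Fm xbar ybar) ↔
      outerNormSV (svInv (coDeriv Fm xbar ybar)) < ⊤) ∧
    (outerNormSV (svInv (coDeriv Fm xbar ybar)) < ⊤ ↔
      ∀ u, (0 : EuclideanSpace ℝ (Fin n)) ∈ coDeriv Fm xbar ybar u → u = 0) :=
  coDeriv_criterion_for_metric_regularity_general Fm xbar ybar hgr hloc

end
end

section
/- Let S : ℝᵐ ⇉ ℝⁿ be a set-valued map and (ȳ, x̄) ∈ gph S a point at which gph S is locally closed. Then lip(S; ȳ|x̄) = limsup, over (y,x) → (ȳ,x̄) with (y,x) ∈ gph S, of |DS(y|x)|⁻. In particular, S has the Aubin property at ȳ for x̄ if and only if this limsup is finite. -/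
open Filter Topology Set Metric RealInnerProductSpace
open scoped ENNReal NNReal Pointwise

noncomputable section

/-!
If `S` has the Aubin property with constant `κ`, then at every graph point `(y, x)` near
`(ybar, xbar)` the difference quotients of `S` in a direction `u` may be chosen in the compact ball
of radius `κ‖u‖`, and a cluster point of them is an element of `DS(y|x)(u)`.

Conversely, let `|DS|⁻ < κ` on the graph near `(ybar, xbar)`. To move from `x ∈ S y'` to a point of
`S y`, minimize the distance to `y` over the graph points `(z, w)` whose displacement `‖w - x‖` is
at most `κ` times the progress `‖y' - y‖ - ‖z - y‖` made towards `y`. If the minimizer had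
`z ≠ y`, then some `v ∈ DS(z|w)(y - z)` with `‖v‖ < κ‖y - z‖` would lead to a graph point that is
closer to `y` and still satisfies the constraint. Hence `z = y`, and `w ∈ S y` satisfies
`‖w - x‖ ≤ κ‖y' - y‖`.
-/

section DescentSet

variable {X Y : Type*} [PseudoMetricSpace X] [PseudoMetricSpace Y]

/-- The points that are reached from `q` by making progress towards `y` in the first component at
the price of moving the second one by at most `κ` times that progress. It is the feasible
region over which the distance to `y` is minimized. -/
def descentSet (κ : ℝ) (y : X) (q : X × Y) : Set (X × Y) :=
  {p | dist p.2 q.2 ≤ κ * (dist q.1 y - dist p.1 y)}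

theorem mem_descentSet {κ : ℝ} {y : X} {p q : X × Y} :
    p ∈ descentSet κ y q ↔ dist p.2 q.2 ≤ κ * (dist q.1 y - dist p.1 y) :=
  Iff.rfl

theorem mem_descentSet_self (κ : ℝ) (y : X) (q : X × Y) : q ∈ descentSet κ y q := by
  simp [mem_descentSet]

theorem descentSet_subset {κ : ℝ} {y : X} {p q : X × Y} (hp : p ∈ descentSet κ y q) :
    descentSet κ y p ⊆ descentSet κ y q := by
  intro p' hp'
  rw [mem_descentSet] at hp hp' ⊢
  linarith [dist_triangle p'.2 p.2 q.2]

theorem isClosed_descentSet (κ : ℝ) (y : X) (q : X × Y) : IsClosed (descentSet κ y q) :=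
  isClosed_le (by fun_prop) (by fun_prop)

theorem descentSet_subset_closedBall_prod {κ : ℝ} (hκ : 0 < κ) (y : X) (q : X × Y) :
    descentSet κ y q ⊆ closedBall y (dist q.1 y) ×ˢ closedBall q.2 (κ * dist q.1 y) := by
  intro p hp
  have hprogress : 0 ≤ dist q.1 y - dist p.1 y :=
    nonneg_of_mul_nonneg_right (dist_nonneg.trans hp) hκ
  refine ⟨sub_nonneg.1 hprogress, mem_closedBall.2 (hp.trans ?_)⟩
  gcongr
  exact sub_le_self _ dist_nonneg

theorem eventually_descentSet_subset_closedBall {κ r : ℝ} (hκ : 0 < κ) (hr : 0 < r) (y₀ : X)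
    (x₀ : Y) :
    ∀ᶠ w : X × X × Y in 𝓝 (y₀, y₀, x₀), descentSet κ w.1 w.2 ⊆ closedBall (y₀, x₀) r := by
  have hfst : ∀ᶠ w : X × X × Y in 𝓝 (y₀, y₀, x₀), dist w.2.1 w.1 + dist w.1 y₀ < r :=
    ContinuousAt.eventually_lt (by fun_prop) continuousAt_const (by simpa)
  have hsnd : ∀ᶠ w : X × X × Y in 𝓝 (y₀, y₀, x₀), κ * dist w.2.1 w.1 + dist w.2.2 x₀ < r :=
    ContinuousAt.eventually_lt (by fun_prop) continuousAt_const (by simpa)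
  filter_upwards [hfst, hsnd] with w hw₁ hw₂
  calc descentSet κ w.1 w.2
      ⊆ closedBall w.1 (dist w.2.1 w.1) ×ˢ closedBall w.2.2 (κ * dist w.2.1 w.1) :=
        descentSet_subset_closedBall_prod hκ _ _
    _ ⊆ closedBall y₀ r ×ˢ closedBall x₀ r :=
        prod_mono (closedBall_subset_closedBall' hw₁.le) (closedBall_subset_closedBall' hw₂.le)
    _ = closedBall (y₀, x₀) r := closedBall_prod_same _ _ _

theorem exists_mem_descentSet_dist_eq_zero {κ : ℝ} {y : X} {q : X × Y} {A : Set (X × Y)}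
    (hqA : q ∈ A) (hA : IsCompact (A ∩ descentSet κ y q))
    (hdescent : ∀ p ∈ A ∩ descentSet κ y q, dist p.1 y ≠ 0 →
      ∃ p' ∈ A ∩ descentSet κ y p, dist p'.1 y < dist p.1 y) :
    ∃ p ∈ A ∩ descentSet κ y q, dist p.1 y = 0 := by
  obtain ⟨p, hp, hmin⟩ := hA.exists_isMinOn ⟨q, hqA, mem_descentSet_self κ y q⟩
    (f := fun p => dist p.1 y) (by fun_prop)
  refine ⟨p, hp, ?_⟩
  by_contra hpy
  obtain ⟨p', ⟨hp'A, hp'⟩, hlt⟩ := hdescent p hp hpy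
  exact (isMinOn_iff.1 hmin p' ⟨hp'A, descentSet_subset hp.2 hp'⟩).not_gt hlt

end DescentSet

theorem LocClosedAt.exists_isCompact_inter_closedBall {α : Type*} [PseudoMetricSpace α]
    [ProperSpace α] {s : Set α} {p : α} (h : LocClosedAt s p) :
    ∃ R > 0, ∀ r ≤ R, IsCompact (s ∩ closedBall p r) := by
  obtain ⟨R, hR, hclosed⟩ := h
  refine ⟨R, hR, fun r hr => ?_⟩
  rw [← inter_eq_right.2 (closedBall_subset_closedBall hr), ← inter_assoc]
  exact (isCompact_closedBall p r).inter_left hclosed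

section ContingentCone

variable {X : Type*} [NormedAddCommGroup X] [NormedSpace ℝ X] {Ω : Set X} {x : X}

theorem zero_mem_contingentCone (hx : x ∈ Ω) : 0 ∈ contingentCone Ω x :=
  ⟨fun k => 1 / ((k : ℝ) + 1), fun _ => 0, fun _ => Nat.one_div_pos_of_nat,
    tendsto_one_div_add_atTop_nhds_zero_nat, tendsto_const_nhds, by simpa⟩

theorem smul_mem_contingentCone {c : ℝ} (hc : 0 < c) {u : X} (hu : u ∈ contingentCone Ω x) :
    c • u ∈ contingentCone Ω x := by
  obtain ⟨t, q, htpos, htlim, hq, hmem⟩ := hu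
  refine ⟨fun k => t k / c, fun k => c • q k, fun k => div_pos (htpos k) hc,
    by simpa using htlim.div_const c, hq.const_smul c, fun k => ?_⟩
  rw [smul_smul, div_mul_cancel₀ _ hc.ne']
  exact hmem k

theorem exists_mem_contingentCone_of_frequently {K : Set X} (hK : IsCompact K)
    (h : ∃ᶠ t : ℝ in 𝓝[>] 0, ∃ u ∈ K, x + t • u ∈ Ω) : ∃ u ∈ K, u ∈ contingentCone Ω x := by
  obtain ⟨t, htlim, ht⟩ :=
    exists_seq_forall_of_frequently (h.and_eventually self_mem_nhdsWithin)
  choose u huK huΩ using fun k => (ht k).1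
  obtain ⟨a, haK, φ, hφ, hlim⟩ := hK.tendsto_subseq huK
  exact ⟨a, haK, t ∘ φ, u ∘ φ, fun k => (ht (φ k)).2,
    (tendsto_nhds_of_tendsto_nhdsWithin htlim).comp hφ.tendsto_atTop, hlim, fun k => huΩ (φ k)⟩

end ContingentCone

section InnerNorm

variable {E F : Type*} [NormedAddCommGroup E] [NormedAddCommGroup F] {H : E → Set F} {κ : ℝ≥0}

theorem innerNormSV_le_of_forall_exists (h : ∀ u, ‖u‖ ≤ 1 → ∃ v ∈ H u, ‖v‖ ≤ κ) :
    innerNormSV H ≤ κ := by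
  refine iSup₂_le fun u hu => ?_
  obtain ⟨v, hv, hvκ⟩ := h u hu
  exact (iInf₂_le v hv).trans (by exact_mod_cast hvκ)

theorem exists_mem_norm_lt_of_innerNormSV_lt (h : innerNormSV H < κ) {u : E} (hu : ‖u‖ ≤ 1) :
    ∃ v ∈ H u, ‖v‖ < κ := by
  have hlt : ⨅ (v : F) (_ : v ∈ H u), (‖v‖₊ : ℝ≥0∞) < κ :=
    (le_iSup₂ (f := fun (u : E) (_ : ‖u‖ ≤ 1) => ⨅ (v : F) (_ : v ∈ H u), (‖v‖₊ : ℝ≥0∞))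
      u hu).trans_lt h
  simp only [iInf_lt_iff] at hlt
  obtain ⟨v, hv, hvκ⟩ := hlt
  exact ⟨v, hv, by exact_mod_cast hvκ⟩

theorem PosHomogeneous.exists_mem_norm_lt_mul [NormedSpace ℝ E] [NormedSpace ℝ F]
    (hH : PosHomogeneous H) (h : innerNormSV H < κ) {u : E} (hu : u ≠ 0) :
    ∃ v ∈ H u, ‖v‖ < κ * ‖u‖ := by
  have hpos : 0 < ‖u‖ := norm_pos_iff.2 hu
  obtain ⟨v, hv, hvκ⟩ := exists_mem_norm_lt_of_innerNormSV_lt h (norm_smul_inv_norm (𝕜 := ℝ) hu).le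
  refine ⟨‖u‖ • v, ?_, ?_⟩
  · simpa [← hH.2 _ hpos, smul_smul, hpos.ne'] using smul_mem_smul_set (a := ‖u‖) hv
  · rw [norm_smul, norm_norm, mul_comm]
    gcongr

end InnerNorm

section GraphicalDerivative

variable {E F : Type*} [NormedAddCommGroup E] [NormedSpace ℝ E] [NormedAddCommGroup F]
  [NormedSpace ℝ F] {S : E → Set F} {y : E} {x : F}

theorem posHomogeneous_gDeriv (hx : x ∈ S y) : PosHomogeneous (gDeriv S y x) := by
  refine ⟨zero_mem_contingentCone (Ω := svGraph S) hx, fun c hc u => ?_⟩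
  ext v
  rw [mem_smul_set_iff_inv_smul_mem₀ hc.ne']
  constructor <;> intro hv
  · simpa [gDeriv, smul_smul, hc.ne'] using smul_mem_contingentCone (inv_pos.2 hc) hv
  · simpa [gDeriv, smul_smul, hc.ne'] using smul_mem_contingentCone hc hv

theorem exists_mem_gDeriv_norm_le [ProperSpace F] {κ : ℝ}
    (h : ∀ᶠ y' in 𝓝 y, ∃ x' ∈ S y', ‖x' - x‖ ≤ κ * ‖y' - y‖) (u : E) :
    ∃ v ∈ gDeriv S y x u, ‖v‖ ≤ κ * ‖u‖ := by
  have hray : Tendsto (fun t : ℝ => y + t • u) (𝓝[>] 0) (𝓝 y) :=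
    tendsto_nhdsWithin_of_tendsto_nhds (Continuous.tendsto' (by fun_prop) _ _ (by simp))
  have hquot : ∀ᶠ t : ℝ in 𝓝[>] 0,
      ∃ p ∈ {u} ×ˢ closedBall (0 : F) (κ * ‖u‖), (y, x) + t • p ∈ svGraph S := by
    filter_upwards [hray.eventually h, self_mem_nhdsWithin] with t ⟨x', hx', hle⟩ (ht : 0 < t)
    refine ⟨(u, t⁻¹ • (x' - x)), ⟨rfl, ?_⟩, by simpa [svGraph, smul_smul, ht.ne'] using hx'⟩
    rw [add_sub_cancel_left, norm_smul, Real.norm_of_nonneg ht.le] at hle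
    rw [mem_closedBall_zero_iff, norm_smul, norm_inv, Real.norm_of_nonneg ht.le,
      inv_mul_le_iff₀ ht]
    linarith
  obtain ⟨⟨_, v⟩, ⟨rfl, hv⟩, hcone⟩ := exists_mem_contingentCone_of_frequently
    (isCompact_singleton.prod (isCompact_closedBall _ _)) hquot.frequently
  exact ⟨v, hcone, mem_closedBall_zero_iff.1 hv⟩

theorem exists_mem_descentSet_dist_lt_of_mem_gDeriv {y' : E} {v : F} {κ : ℝ}
    (hv : v ∈ gDeriv S y x (y' - y)) (hvκ : ‖v‖ < κ * ‖y' - y‖) :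
    ∃ p ∈ svGraph S ∩ descentSet κ y' (y, x), dist p.1 y' < dist y y' := by
  obtain ⟨t, q, htpos, htlim, hq, hmem⟩ := hv
  set u := y' - y with hu
  have herr : Tendsto (fun k => ‖(q k).1 - u‖) atTop (𝓝 0) := by
    simpa using (hq.fst_nhds.sub_const u).norm
  have hgain : Tendsto (fun k => ‖u‖ - ‖(q k).1 - u‖) atTop (𝓝 ‖u‖) := by
    simpa using herr.const_sub ‖u‖
  have hupos : 0 < ‖u‖ := (norm_nonneg u).lt_of_ne' fun h => by
    rw [h, mul_zero] at hvκ
    exact hvκ.not_ge (norm_nonneg v)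
  have hκ : 0 < κ := pos_of_mul_pos_left ((norm_nonneg v).trans_lt hvκ) hupos.le
  obtain ⟨k, ht1, hgain_pos, hcost⟩ := ((htlim.eventually_lt_const one_pos).and
    ((hgain.eventually_const_lt hupos).and
      (hq.snd_nhds.norm.eventually_lt (hgain.const_mul κ) hvκ))).exists
  have htk := htpos k
  have hstep : dist (y + t k • (q k).1) y' ≤ dist y y' - t k * (‖u‖ - ‖(q k).1 - u‖) := by
    rw [dist_eq_norm, dist_eq_norm, norm_sub_rev y y', ← hu]
    calc ‖y + t k • (q k).1 - y'‖ = ‖t k • ((q k).1 - u) - (1 - t k) • u‖ := by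
          congr 1; rw [hu]; module
      _ ≤ ‖t k • ((q k).1 - u)‖ + ‖(1 - t k) • u‖ := norm_sub_le _ _
      _ = ‖u‖ - t k * (‖u‖ - ‖(q k).1 - u‖) := by
          rw [norm_smul, norm_smul, Real.norm_of_nonneg htk.le,
            Real.norm_of_nonneg (sub_pos.2 ht1).le]
          ring
  refine ⟨(y, x) + t k • q k, ⟨hmem k, ?_⟩, ?_⟩
  · calc dist (x + t k • (q k).2) x = t k * ‖(q k).2‖ := by
          rw [dist_self_add_left, norm_smul, Real.norm_of_nonneg htk.le]
      _ ≤ t k * (κ * (‖u‖ - ‖(q k).1 - u‖)) := by gcongr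
      _ = κ * (t k * (‖u‖ - ‖(q k).1 - u‖)) := by ring
      _ ≤ κ * (dist y y' - dist (y + t k • (q k).1) y') := by gcongr; linarith
  · exact hstep.trans_lt (sub_lt_self _ (mul_pos htk hgain_pos))

theorem exists_mem_descentSet_dist_lt_of_innerNormSV_lt {y' : E} {κ : ℝ≥0} (hx : x ∈ S y)
    (h : innerNormSV (gDeriv S y x) < κ) (hy : y ≠ y') :
    ∃ p ∈ svGraph S ∩ descentSet κ y' (y, x), dist p.1 y' < dist y y' := by
  obtain ⟨v, hv, hvκ⟩ :=
    (posHomogeneous_gDeriv hx).exists_mem_norm_lt_mul h (sub_ne_zero.2 hy.symm)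
  exact exists_mem_descentSet_dist_lt_of_mem_gDeriv hv hvκ

end GraphicalDerivative

section Aubin

variable {E F : Type*} [NormedAddCommGroup E] [NormedAddCommGroup F] {S : E → Set F} {ybar : E}
  {xbar : F} {κ : ℝ≥0}

theorem aubinWith_iff_eventually :
    AubinWith κ S ybar xbar ↔ ∀ᶠ w : E × E × F in 𝓝 (ybar, ybar, xbar),
      w.2.2 ∈ S w.2.1 → ∃ x' ∈ S w.1, ‖w.2.2 - x'‖ ≤ κ * ‖w.1 - w.2.1‖ := by
  constructor
  · rintro ⟨V, hV, U, hU, h⟩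
    filter_upwards [prod_mem_nhds hV (prod_mem_nhds hV hU)] with w ⟨hy, hy', hx⟩ hw
    exact h _ hy _ hy' _ ⟨hw, hx⟩
  · intro h
    obtain ⟨V, hV, W, hW, hVW⟩ := mem_nhds_prod_iff.1 h
    obtain ⟨V', hV', U, hU, hVU⟩ := mem_nhds_prod_iff.1 hW
    exact ⟨V ∩ V', inter_mem hV hV', U, hU, fun y hy y' hy' x hx =>
      hVW (mk_mem_prod hy.1 (hVU (mk_mem_prod hy'.2 hx.2))) hx.1⟩

theorem AubinWith.lipMod_le (h : AubinWith κ S ybar xbar) : lipMod S ybar xbar ≤ κ :=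
  iInf₂_le κ h

theorem exists_aubinWith_iff_lipMod_lt_top :
    (∃ κ : ℝ≥0, AubinWith κ S ybar xbar) ↔ lipMod S ybar xbar < ⊤ := by
  simp [lipMod, iInf_lt_iff]

variable [NormedSpace ℝ E] [NormedSpace ℝ F] [ProperSpace F]

theorem AubinWith.eventually_innerNormSV_gDeriv_le (h : AubinWith κ S ybar xbar) :
    ∀ᶠ q in 𝓝[svGraph S] (ybar, xbar), innerNormSV (gDeriv S q.1 q.2) ≤ κ := by
  have hdiag : Tendsto (fun q : E × F => (q.1, q)) (𝓝 (ybar, xbar)) (𝓝 (ybar, ybar, xbar)) :=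
    Continuous.tendsto (by fun_prop) (ybar, xbar)
  rw [eventually_nhdsWithin_iff]
  filter_upwards [hdiag.eventually (aubinWith_iff_eventually.1 h).eventually_nhds]
    with ⟨y, x⟩ hlip (hx : x ∈ S y)
  have hcalm : ∀ᶠ y' in 𝓝 y, ∃ x' ∈ S y', ‖x' - x‖ ≤ κ * ‖y' - y‖ := by
    simpa [hx, norm_sub_rev] using hlip.curry_nhds.mono fun y' h => h.self_of_nhds
  refine innerNormSV_le_of_forall_exists fun u hu => ?_
  obtain ⟨v, hv, hvκ⟩ := exists_mem_gDeriv_norm_le hcalm u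
  exact ⟨v, hv, hvκ.trans (mul_le_of_le_one_right κ.2 hu)⟩

variable [ProperSpace E]

theorem AubinWith.of_limsup_innerNormSV_gDeriv_lt (hloc : LocClosedAt (svGraph S) (ybar, xbar))
    (h : limsup (fun q : E × F => innerNormSV (gDeriv S q.1 q.2)) (𝓝[svGraph S] (ybar, xbar)) < κ) :
    AubinWith κ S ybar xbar := by
  have hκ : (0 : ℝ) < κ := by exact_mod_cast h.pos
  obtain ⟨R, hR, hcompact⟩ := hloc.exists_isCompact_inter_closedBall
  obtain ⟨ρ, hρ, hderiv⟩ := nhds_basis_closedBall.eventually_iff.1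
    (eventually_nhdsWithin_iff.1 (eventually_lt_of_limsup_lt h))
  rw [aubinWith_iff_eventually]
  filter_upwards [eventually_descentSet_subset_closedBall hκ (lt_min hR hρ) ybar xbar]
    with ⟨y, q⟩ hball hq
  have hA : IsCompact (svGraph S ∩ descentSet κ y q) := by
    rw [← inter_eq_right.2 hball, ← inter_assoc]
    exact (hcompact _ (min_le_left R ρ)).inter_right (isClosed_descentSet κ y q)
  obtain ⟨⟨y', x'⟩, ⟨hx', hle⟩, hy'⟩ := exists_mem_descentSet_dist_eq_zero hq hA
    fun p ⟨hpS, hp⟩ hpy => exists_mem_descentSet_dist_lt_of_innerNormSV_lt hpS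
      (hderiv (closedBall_subset_closedBall (min_le_right R ρ) (hball hp)) hpS) (dist_ne_zero.1 hpy)
  obtain rfl : y' = y := dist_eq_zero.1 hy'
  refine ⟨x', hx', ?_⟩
  simpa [mem_descentSet, dist_eq_norm, norm_sub_rev] using hle

theorem lipMod_eq_limsup_innerNormSV_gDeriv (hloc : LocClosedAt (svGraph S) (ybar, xbar)) :
    lipMod S ybar xbar = limsup (fun q : E × F => innerNormSV (gDeriv S q.1 q.2))
      (𝓝[svGraph S] (ybar, xbar)) := by
  apply le_antisymm
  · refine le_of_forall_gt fun c hc => ?_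
    obtain ⟨κ, hκ, hκc⟩ := ENNReal.lt_iff_exists_nnreal_btwn.1 hc
    exact (AubinWith.of_limsup_innerNormSV_gDeriv_lt hloc hκ).lipMod_le.trans_lt hκc
  · exact le_iInf₂ fun κ hκ => limsup_le_of_le (h := hκ.eventually_innerNormSV_gDeriv_le)

theorem gDeriv_criterion_for_aubin_general (hloc : LocClosedAt (svGraph S) (ybar, xbar)) :
    lipMod S ybar xbar = limsup (fun q : E × F => innerNormSV (gDeriv S q.1 q.2))
        (𝓝[svGraph S] (ybar, xbar)) ∧
    ((∃ κ : ℝ≥0, AubinWith κ S ybar xbar) ↔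
      limsup (fun q : E × F => innerNormSV (gDeriv S q.1 q.2))
        (𝓝[svGraph S] (ybar, xbar)) < ⊤) := by
  have hlip := lipMod_eq_limsup_innerNormSV_gDeriv hloc
  exact ⟨hlip, hlip ▸ exists_aubinWith_iff_lipMod_lt_top⟩

end Aubin

/-- Graphical derivative criterion for the Aubin property:
`lip (S; ybar|xbar)` equals the limsup of `|DS(y|x)|⁻` over the graph. -/
theorem gDeriv_criterion_for_aubin {n m : ℕ}
    (S : EuclideanSpace ℝ (Fin m) → Set (EuclideanSpace ℝ (Fin n)))
    (ybar : EuclideanSpace ℝ (Fin m)) (xbar : EuclideanSpace ℝ (Fin n))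
    (hgr : xbar ∈ S ybar) (hloc : LocClosedAt (svGraph S) (ybar, xbar)) :
    lipMod S ybar xbar = Filter.limsup
        (fun q : EuclideanSpace ℝ (Fin m) × EuclideanSpace ℝ (Fin n) =>
          innerNormSV (gDeriv S q.1 q.2))
        (𝓝[svGraph S] (ybar, xbar)) ∧
    ((∃ κ : ℝ≥0, AubinWith κ S ybar xbar) ↔
      Filter.limsup
        (fun q : EuclideanSpace ℝ (Fin m) × EuclideanSpace ℝ (Fin n) =>
          innerNormSV (gDeriv S q.1 q.2))
        (𝓝[svGraph S] (ybar, xbar)) < ⊤) :=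
  gDeriv_criterion_for_aubin_general hloc

end
end

section
/- Let S : ℝᵐ ⇉ ℝⁿ be a set-valued map and (ȳ, x̄) ∈ gph S a point at which gph S is locally closed. Then clm(S; ȳ|x̄) = |DS(ȳ|x̄)|⁺; in particular, S has the isolated calmness property at ȳ for x̄ if and only if |DS(ȳ|x̄)|⁺ < ∞. -/
open Filter Topology Set Metric RealInnerProductSpace
open scoped ENNReal NNReal Pointwise

noncomputable section

/-!
Isolated calmness with constant `κ` says that near `(ȳ, x̄)` the graph of `S` lies in
`(ȳ, x̄) + C`, where `C` is the closed cone `{(u, v) | ‖v‖ ≤ κ ‖u‖}`. A closed cone passes to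
contingent directions, so every such `κ` bounds the graphical derivative. Conversely, a point of
the graph outside `(ȳ, x̄) + C` rescales to a direction in `{(u, v) | ‖u‖ ≤ 1, ‖v‖ = κ}`. In finite
dimensions this set is compact, so if it misses the contingent cone, no such points occur near
`(ȳ, x̄)`.
-/

section Cones

variable {X : Type*} [NormedAddCommGroup X] [NormedSpace ℝ X] {Ω K C : Set X} {x u : X}

theorem mem_contingentCone_iff_frequently :
    u ∈ contingentCone Ω x ↔ ∃ᶠ q : ℝ × X in 𝓝[>] 0 ×ˢ 𝓝 u, x + q.1 • q.2 ∈ Ω := by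
  constructor
  · rintro ⟨t, w, ht, ht0, hw, hmem⟩
    have ht0' : Tendsto t atTop (𝓝[>] 0) :=
      tendsto_nhdsWithin_iff.2 ⟨ht0, Eventually.of_forall ht⟩
    exact (ht0'.prodMk hw).frequently (Frequently.of_forall hmem)
  · intro h
    have hpos : ∀ᶠ q : ℝ × X in 𝓝[>] 0 ×ˢ 𝓝 u, 0 < q.1 :=
      tendsto_fst.eventually self_mem_nhdsWithin
    obtain ⟨q, hq, hmem⟩ := exists_seq_forall_of_frequently (h.and_eventually hpos)
    have hq0 : Tendsto (fun k => (q k).1) atTop (𝓝 0) :=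
      tendsto_nhds_of_tendsto_nhdsWithin (tendsto_fst.comp hq)
    exact ⟨_, _, fun k => (hmem k).2, hq0, tendsto_snd.comp hq, fun k => (hmem k).1⟩

theorem contingentCone_subset_of_eventually_sub_mem (hC : IsClosed C)
    (hcone : ∀ t : ℝ, 0 < t → ∀ w, t • w ∈ C → w ∈ C) (hΩ : ∀ᶠ p in 𝓝 x, p ∈ Ω → p - x ∈ C) :
    contingentCone Ω x ⊆ C := by
  intro u hu
  by_contra huC
  have hlim : Tendsto (fun q : ℝ × X => x + q.1 • q.2) (𝓝[>] 0 ×ˢ 𝓝 u) (𝓝 x) := by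
    have ht : Tendsto Prod.fst (𝓝[>] (0 : ℝ) ×ˢ 𝓝 u) (𝓝 0) :=
      tendsto_nhds_of_tendsto_nhdsWithin tendsto_fst
    simpa using (ht.smul tendsto_snd).const_add x
  have hpos : ∀ᶠ q : ℝ × X in 𝓝[>] 0 ×ˢ 𝓝 u, 0 < q.1 :=
    tendsto_fst.eventually self_mem_nhdsWithin
  have hout : ∀ᶠ q : ℝ × X in 𝓝[>] 0 ×ˢ 𝓝 u, q.2 ∉ C :=
    tendsto_snd.eventually (hC.isOpen_compl.mem_nhds huC)
  refine mem_contingentCone_iff_frequently.1 hu ?_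
  filter_upwards [hlim.eventually hΩ, hpos, hout] with q hq ht hqC hmem
  exact hqC (hcone q.1 ht q.2 (by simpa using hq hmem))

theorem eventually_forall_add_smul_notMem_of_disjoint_contingentCone (hK : IsCompact K)
    (hdisj : Disjoint K (contingentCone Ω x)) :
    ∀ᶠ t : ℝ in 𝓝[>] 0, ∀ w ∈ K, x + t • w ∉ Ω := by
  have hev : ∀ᶠ q : ℝ × X in 𝓝[>] 0 ×ˢ 𝓝ˢ K, x + q.1 • q.2 ∉ Ω := by
    simp only [hK.prod_nhdsSet_eq_biSup, eventually_iSup]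
    exact fun w hw => not_frequently.1
      (mem_contingentCone_iff_frequently.not.1 (disjoint_left.1 hdisj hw))
  exact hev.curry.mono fun _ ht => ht.self_of_nhdsSet

end Cones

section Norms

variable {E F : Type*} [NormedAddCommGroup E] [NormedAddCommGroup F]

theorem outerNormSV_le_iff {H : E → Set F} {a : ℝ≥0∞} :
    outerNormSV H ≤ a ↔ ∀ x, ‖x‖ ≤ 1 → ∀ y ∈ H x, (‖y‖₊ : ℝ≥0∞) ≤ a := by
  simp only [outerNormSV, iSup_le_iff]

end Norms

section Stability

variable {E F : Type*} [NormedAddCommGroup E] [NormedAddCommGroup F]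
  {S : F → Set E} {ybar : F} {xbar : E} {κ : ℝ≥0}

theorem calmWith_iff_eventually :
    CalmWith κ S ybar xbar ↔
      ∀ᶠ p in 𝓝 (ybar, xbar), p ∈ svGraph S → ‖p.2 - xbar‖ ≤ κ * ‖p.1 - ybar‖ := by
  constructor
  · rintro ⟨V, hV, U, hU, hVU⟩
    filter_upwards [prod_mem_nhds hV hU] with p hp hpS
    exact hVU p.1 hp.1 p.2 ⟨hpS, hp.2⟩
  · intro h
    obtain ⟨V, hV, U, hU, hVU⟩ := mem_nhds_prod_iff.1 h
    exact ⟨V, hV, U, hU, fun y hy x hx => hVU (mk_mem_prod hy hx.2) hx.1⟩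

theorem CalmWith.clmMod_le (h : CalmWith κ S ybar xbar) : clmMod S ybar xbar ≤ κ :=
  iInf₂_le κ h

theorem clmMod_lt_top_iff : clmMod S ybar xbar < ⊤ ↔ ∃ κ : ℝ≥0, CalmWith κ S ybar xbar := by
  simp [clmMod, iInf_lt_iff]

end Stability

section Derivatives

variable {E F : Type*} [NormedAddCommGroup E] [NormedSpace ℝ E]
  [NormedAddCommGroup F] [NormedSpace ℝ F] {S : F → Set E} {ybar : F} {xbar : E} {κ : ℝ≥0}

theorem CalmWith.norm_le_of_mem_gDeriv (h : CalmWith κ S ybar xbar) {u : F} {v : E}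
    (hv : v ∈ gDeriv S ybar xbar u) : ‖v‖ ≤ κ * ‖u‖ := by
  have hclosed : IsClosed {w : F × E | ‖w.2‖ ≤ κ * ‖w.1‖} :=
    isClosed_le (by fun_prop) (by fun_prop)
  refine contingentCone_subset_of_eventually_sub_mem hclosed (fun t ht w hw => ?_)
    (calmWith_iff_eventually.1 h) hv
  have hscaled : t * ‖w.2‖ ≤ t * (κ * ‖w.1‖) := by
    simpa [norm_smul, abs_of_pos ht, mul_left_comm] using hw
  exact le_of_mul_le_mul_left hscaled ht

theorem outerNormSV_gDeriv_le_clmMod :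
    outerNormSV (gDeriv S ybar xbar) ≤ clmMod S ybar xbar := by
  refine le_iInf₂ fun κ hκ => outerNormSV_le_iff.2 fun u hu v hv => ?_
  have hvκ : ‖v‖ ≤ κ := (hκ.norm_le_of_mem_gDeriv hv).trans (mul_le_of_le_one_right κ.coe_nonneg hu)
  exact_mod_cast hvκ

theorem disjoint_contingentCone_of_outerNormSV_gDeriv_lt
    (h : outerNormSV (gDeriv S ybar xbar) < κ) :
    Disjoint (closedBall (0 : F) 1 ×ˢ sphere (0 : E) κ)
      (contingentCone (svGraph S) (ybar, xbar)) := by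
  refine disjoint_left.2 fun ⟨u, v⟩ ⟨hu, hv⟩ hmem => h.not_ge ?_
  have hvκ : ‖v‖₊ = κ := NNReal.eq (mem_sphere_zero_iff_norm.1 hv)
  exact hvκ ▸ outerNormSV_le_iff.1 le_rfl u (mem_closedBall_zero_iff.1 hu) v hmem

theorem calmWith_of_outerNormSV_gDeriv_lt [ProperSpace E] [ProperSpace F]
    (h : outerNormSV (gDeriv S ybar xbar) < κ) : CalmWith κ S ybar xbar := by
  have hκ : (0 : ℝ) < κ := by exact_mod_cast pos_of_gt h
  have hK : IsCompact (closedBall (0 : F) 1 ×ˢ sphere (0 : E) κ) :=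
    (isCompact_closedBall _ _).prod (isCompact_sphere _ _)
  have hmiss := eventually_forall_add_smul_notMem_of_disjoint_contingentCone hK
    (disjoint_contingentCone_of_outerNormSV_gDeriv_lt h)
  have hscale : Tendsto (fun p : F × E => ‖p.2 - xbar‖ / κ) (𝓝 (ybar, xbar)) (𝓝 0) :=
    Continuous.tendsto' (by fun_prop) _ _ (by simp)
  refine calmWith_iff_eventually.2 ?_
  filter_upwards [hscale.eventually (eventually_nhdsWithin_iff.1 hmiss)] with p hp hpS
  by_contra! hlt
  set t : ℝ := ‖p.2 - xbar‖ / κ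
  have hnorm : ‖p.2 - xbar‖ = t * κ := (div_mul_cancel₀ _ hκ.ne').symm
  have ht : 0 < t := div_pos ((by positivity : (0 : ℝ) ≤ _).trans_lt hlt) hκ
  refine hp ht (t⁻¹ • (p - (ybar, xbar))) ⟨?_, ?_⟩ ?_
  · have hu : ‖p.1 - ybar‖ ≤ t := (le_div_iff₀' hκ).2 hlt.le
    simpa [norm_smul, abs_of_pos ht, inv_mul_le_one₀ ht] using hu
  · simp [norm_smul, abs_of_pos ht, hnorm, ht.ne']
  · simpa [smul_inv_smul₀ ht.ne'] using hpS

theorem clmMod_le_outerNormSV_gDeriv [ProperSpace E] [ProperSpace F] :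
    clmMod S ybar xbar ≤ outerNormSV (gDeriv S ybar xbar) := by
  refine le_of_forall_gt fun a ha => ?_
  obtain ⟨κ, hκ, hκa⟩ := ENNReal.lt_iff_exists_nnreal_btwn.1 ha
  exact (calmWith_of_outerNormSV_gDeriv_lt hκ).clmMod_le.trans_lt hκa

theorem gDeriv_criterion_for_isolated_calmness_general [ProperSpace E] [ProperSpace F]
    (S : F → Set E) (ybar : F) (xbar : E) :
    clmMod S ybar xbar = outerNormSV (gDeriv S ybar xbar) ∧
    ((∃ κ : ℝ≥0, CalmWith κ S ybar xbar) ↔ outerNormSV (gDeriv S ybar xbar) < ⊤) := by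
  have heq : clmMod S ybar xbar = outerNormSV (gDeriv S ybar xbar) :=
    clmMod_le_outerNormSV_gDeriv.antisymm outerNormSV_gDeriv_le_clmMod
  exact ⟨heq, heq ▸ clmMod_lt_top_iff.symm⟩

end Derivatives

/-- Graphical derivative criterion for isolated calmness:
`clm (S; ybar|xbar) = |DS(ybar|xbar)|⁺`. -/
theorem gDeriv_criterion_for_isolated_calmness {n m : ℕ}
    (S : EuclideanSpace ℝ (Fin m) → Set (EuclideanSpace ℝ (Fin n)))
    (ybar : EuclideanSpace ℝ (Fin m)) (xbar : EuclideanSpace ℝ (Fin n))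
    (hgr : xbar ∈ S ybar) (hloc : LocClosedAt (svGraph S) (ybar, xbar)) :
    clmMod S ybar xbar = outerNormSV (gDeriv S ybar xbar) ∧
    ((∃ κ : ℝ≥0, CalmWith κ S ybar xbar) ↔ outerNormSV (gDeriv S ybar xbar) < ⊤) :=
  gDeriv_criterion_for_isolated_calmness_general S ybar xbar

end
end
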